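/- arXiv:2301.03517 — 2 statements merged into one kernel-verified Lean document; each statement's English description precedes it below -/
import Mathlib

section
/- Let α ∈ (0,1) and let X = (X_1,…,X_n) be a random vector with VaR_α(X_i) = 0 for every i. Let A be an event independent of X with P(A) = p ∈ (0,1), and set Z = (X_1·1_A, …, X_n·1_A). Then DQ^VaR_α(Z) = p · DQ^VaR_α(X). -/
open MeasureTheory ProbabilityTheory Filter Set

namespace DQ

variable {Ω : Type*} [MeasurableSpace Ω]

/-- An atomless probability measure: every non-null measurable set has a measurable
subset of strictly smaller positive measure. -/
def Atomless (P : Measure Ω) : Prop :=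
  ∀ A : Set Ω, MeasurableSet A → 0 < P A →
    ∃ B, MeasurableSet B ∧ B ⊆ A ∧ 0 < P B ∧ P B < P A

/-- Value-at-Risk at level `α` (small-`α` convention):
`VaR_α(X) = inf {x | P(X ≤ x) ≥ 1 - α}`. -/
noncomputable def VaR (P : Measure Ω) (α : ℝ) (X : Ω → ℝ) : ℝ :=
  sInf {x : ℝ | 1 - α ≤ (P {ω | X ω ≤ x}).toReal}

/-- Expected Shortfall at level `α`: `ES_α(X) = (1/α) ∫_0^α VaR_β(X) dβ`. -/
noncomputable def ES (P : Measure Ω) (α : ℝ) (X : Ω → ℝ) : ℝ :=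
  (1 / α) * ∫ β in Set.Ioo (0 : ℝ) α, VaR P β X

/-- `α* = inf {β ∈ (0,1) | VaR_β(∑ Xᵢ) ≤ ∑ VaR_α(Xᵢ)}`, with `inf ∅ = 1`. -/
noncomputable def alphaStarVaR (P : Measure Ω) (α : ℝ) {n : ℕ} (X : Fin n → Ω → ℝ) : ℝ :=
  sInf ({β ∈ Set.Ioo (0 : ℝ) 1 |
    VaR P β (fun ω => ∑ i, X i ω) ≤ ∑ i, VaR P α (X i)} ∪ {1})

/-- Diversification quotient based on VaR: `DQ^VaR_α(X) = α*/α`. -/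
noncomputable def DQVaR (P : Measure Ω) (α : ℝ) {n : ℕ} (X : Fin n → Ω → ℝ) : ℝ :=
  alphaStarVaR P α X / α

/-- `α* = inf {β ∈ (0,1) | ES_β(∑ Xᵢ) ≤ ∑ ES_α(Xᵢ)}`, with `inf ∅ = 1`. -/
noncomputable def alphaStarES (P : Measure Ω) (α : ℝ) {n : ℕ} (X : Fin n → Ω → ℝ) : ℝ :=
  sInf ({β ∈ Set.Ioo (0 : ℝ) 1 |
    ES P β (fun ω => ∑ i, X i ω) ≤ ∑ i, ES P α (X i)} ∪ {1})

/-- Diversification quotient based on ES: `DQ^ES_α(X) = α*/α`. -/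
noncomputable def DQES (P : Measure Ω) (α : ℝ) {n : ℕ} (X : Fin n → Ω → ℝ) : ℝ :=
  alphaStarES P α X / α

end DQ

/-!
The infimum in `alphaStarVaR` is the tail probability `P(∑ Xᵢ > ∑ VaR_α(Xᵢ))`, because
`VaR_β(S) ≤ x` if and only if `P(S > x) ≤ β`. Replacing `Xᵢ` by `Xᵢ 1_A` keeps `VaR_α = 0`, and it
replaces the event `{∑ Xᵢ > 0}` by its intersection with `A`, whose probability factors by
independence.
-/

namespace DQ

theorem csInf_setOf_le_stieltjes_le_iff {R : Type*} [ConditionallyCompleteLinearOrder R]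
    [TopologicalSpace R] [OrderTopology R] [DenselyOrdered R] [NoMaxOrder R]
    (f : StieltjesFunction R) {t : ℝ} (hne : {x | t ≤ f x}.Nonempty)
    (hbdd : BddBelow {x | t ≤ f x}) {x : R} :
    sInf {x | t ≤ f x} ≤ x ↔ t ≤ f x := by
  refine ⟨fun hx => ?_, fun hx => csInf_le hbdd hx⟩
  rw [← f.iInf_Ioi_eq x]
  refine le_ciInf fun y => ?_
  obtain ⟨z, hz, hzy⟩ := exists_lt_of_csInf_lt hne (hx.trans_lt y.2)
  exact hz.trans (f.mono hzy.le)

theorem csInf_setOf_le_cdf_le_iff (μ : Measure ℝ) {t : ℝ} (ht : t ∈ Ioo 0 1) {x : ℝ} :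
    sInf {x | t ≤ cdf μ x} ≤ x ↔ t ≤ cdf μ x := by
  obtain ⟨a, ha⟩ := ((tendsto_cdf_atBot μ).eventually_lt_const ht.1).exists
  obtain ⟨b, hb⟩ := ((tendsto_cdf_atTop μ).eventually_const_lt ht.2).exists
  refine csInf_setOf_le_stieltjes_le_iff (cdf μ) ⟨b, hb.le⟩ ⟨a, fun y (hy : t ≤ cdf μ y) => ?_⟩
  exact ((monotone_cdf μ).reflect_lt (ha.trans_le hy)).le

theorem csInf_Ioo_zero_one_inter_Ici_union_one {q : ℝ} (hq : q ∈ Icc 0 1) :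
    sInf (Ioo 0 1 ∩ Ici q ∪ {1}) = q := by
  refine csInf_eq_of_forall_ge_of_forall_gt_exists_lt ⟨1, Or.inr rfl⟩ ?_ fun w hqw => ?_
  · rintro β (⟨-, hqβ⟩ | rfl)
    exacts [hqβ, hq.2]
  · obtain h1w | hw1 := lt_or_ge 1 w
    · exact ⟨1, Or.inr rfl, h1w⟩
    · obtain ⟨β, hqβ, hβw⟩ := exists_between hqw
      exact ⟨β, Or.inl ⟨⟨hq.1.trans_lt hqβ, hβw.trans_le hw1⟩, hqβ.le⟩, hβw⟩

theorem setOf_sum_indicator_pos {Ω ι M : Type*} [Fintype ι] [AddCommMonoid M] [Preorder M]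
    (X : ι → Ω → M) (A : Set Ω) :
    {ω | 0 < ∑ i, A.indicator (X i) ω} = A ∩ {ω | 0 < ∑ i, X i ω} := by
  ext ω
  by_cases hωA : ω ∈ A <;> simp [hωA]

theorem indepSet_preimage_of_indep_comap {Ω E : Type*} [MeasurableSpace Ω] [mE : MeasurableSpace E]
    {P : Measure Ω} {A : Set Ω} {Y : Ω → E}
    (h : Indep (MeasurableSpace.generateFrom {A}) (mE.comap Y) P) {s : Set E}
    (hs : MeasurableSet s) : IndepSet A (Y ⁻¹' s) P := by
  rw [IndepSet_iff_Indep]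
  refine indep_of_indep_of_le_right h (MeasurableSpace.generateFrom_le ?_)
  rintro _ rfl
  exact ⟨s, hs, rfl⟩

variable {Ω : Type*} [MeasurableSpace Ω] {P : Measure Ω} [IsProbabilityMeasure P]

theorem cdf_map_eq_one_sub_measureReal_lt {X : Ω → ℝ} (hX : AEMeasurable X P) (x : ℝ) :
    cdf (P.map X) x = 1 - P.real {ω | x < X ω} := by
  have : IsProbabilityMeasure (P.map X) := Measure.isProbabilityMeasure_map hX
  rw [cdf_eq_real, map_measureReal_apply_of_aemeasurable hX measurableSet_Iic,
    ← probReal_compl_eq_one_sub₀ (nullMeasurableSet_lt aemeasurable_const hX)]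
  congr 1
  ext ω
  simp

theorem VaR_eq_csInf_cdf {X : Ω → ℝ} (hX : AEMeasurable X P) (β : ℝ) :
    VaR P β X = sInf {x | 1 - β ≤ cdf (P.map X) x} := by
  have : IsProbabilityMeasure (P.map X) := Measure.isProbabilityMeasure_map hX
  simp only [cdf_eq_real, map_measureReal_apply_of_aemeasurable hX measurableSet_Iic]
  rfl

theorem VaR_le_iff {X : Ω → ℝ} (hX : AEMeasurable X P) {β : ℝ} (hβ : β ∈ Ioo 0 1) {x : ℝ} :
    VaR P β X ≤ x ↔ P.real {ω | x < X ω} ≤ β := by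
  have hβ' : 1 - β ∈ Ioo 0 1 := ⟨sub_pos.2 hβ.2, sub_lt_self 1 hβ.1⟩
  rw [VaR_eq_csInf_cdf hX, csInf_setOf_le_cdf_le_iff _ hβ', cdf_map_eq_one_sub_measureReal_lt hX,
    sub_le_sub_iff_left]

theorem lt_VaR_iff {X : Ω → ℝ} (hX : AEMeasurable X P) {β : ℝ} (hβ : β ∈ Ioo 0 1) {x : ℝ} :
    x < VaR P β X ↔ β < P.real {ω | x < X ω} := by
  rw [← not_le, VaR_le_iff hX hβ, not_le]

theorem VaR_indicator_eq_zero {X : Ω → ℝ} (hX : AEMeasurable X P) {A : Set Ω}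
    (hA : NullMeasurableSet A P) {α : ℝ} (hα : α ∈ Ioo 0 1) (h0 : VaR P α X = 0) :
    VaR P α (A.indicator X) = 0 := by
  have hZ : AEMeasurable (A.indicator X) P := hX.indicator₀ hA
  refine le_antisymm ?_ (le_of_forall_lt fun y hy => ?_)
  · rw [VaR_le_iff hZ hα]
    refine (measureReal_mono fun ω (hω : 0 < A.indicator X ω) => ?_).trans
      ((VaR_le_iff hX hα).1 h0.le)
    have hωA : ω ∈ A := mem_of_indicator_ne_zero hω.ne'
    simpa [hωA] using hω
  · rw [lt_VaR_iff hZ hα]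
    refine ((lt_VaR_iff hX hα).1 (hy.trans_eq h0.symm)).trans_le (measureReal_mono fun ω hω => ?_)
    by_cases hωA : ω ∈ A
    · simpa [hωA] using hω
    · simpa [hωA] using hy

variable {n : ℕ} {X : Fin n → Ω → ℝ}

theorem alphaStarVaR_eq_measureReal (hX : ∀ i, AEMeasurable (X i) P) (α : ℝ) :
    alphaStarVaR P α X = P.real {ω | ∑ i, VaR P α (X i) < ∑ i, X i ω} := by
  have hS : AEMeasurable (fun ω => ∑ i, X i ω) P :=
    Finset.aemeasurable_fun_sum _ fun i _ => hX i
  rw [alphaStarVaR,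
    ← csInf_Ioo_zero_one_inter_Ici_union_one ⟨measureReal_nonneg, measureReal_le_one⟩]
  congr 2
  ext β
  exact and_congr_right fun hβ => VaR_le_iff hS hβ

theorem DQVaR_eq_of_VaR_eq_zero (hX : ∀ i, AEMeasurable (X i) P) {α : ℝ}
    (h0 : ∀ i, VaR P α (X i) = 0) : DQVaR P α X = P.real {ω | 0 < ∑ i, X i ω} / α := by
  simp only [DQVaR, alphaStarVaR_eq_measureReal hX, h0, Finset.sum_const_zero]

end DQ

open DQ in
theorem stmt10_general {Ω : Type*} [MeasurableSpace Ω] {P : Measure Ω} [IsProbabilityMeasure P]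
    {n : ℕ} {X : Fin n → Ω → ℝ} (hX : ∀ i, AEMeasurable (X i) P) {α : ℝ} (hα : α ∈ Ioo 0 1)
    (h0 : ∀ i, VaR P α (X i) = 0) {A : Set Ω} (hA : NullMeasurableSet A P)
    (hindep : IndepSet A {ω | 0 < ∑ i, X i ω} P) :
    DQVaR P α (fun i => A.indicator (X i)) = P.real A * DQVaR P α X := by
  have hZ : ∀ i, AEMeasurable (A.indicator (X i)) P := fun i => (hX i).indicator₀ hA
  have hZ0 : ∀ i, VaR P α (A.indicator (X i)) = 0 := fun i =>
    VaR_indicator_eq_zero (hX i) hA hα (h0 i)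
  calc DQVaR P α (fun i => A.indicator (X i))
      = P.real {ω | 0 < ∑ i, A.indicator (X i) ω} / α := DQVaR_eq_of_VaR_eq_zero hZ hZ0
    _ = P.real (A ∩ {ω | 0 < ∑ i, X i ω}) / α := by rw [setOf_sum_indicator_pos]
    _ = P.real A * P.real {ω | 0 < ∑ i, X i ω} / α := by
      simp only [measureReal_def, hindep.measure_inter_eq_mul, ENNReal.toReal_mul]
    _ = P.real A * DQVaR P α X := by rw [DQVaR_eq_of_VaR_eq_zero hX h0, mul_div_assoc]

open DQ in
/-- If VaR_α(Xᵢ) = 0 for all i, A is an event with P(A) = p ∈ (0,1) independent of X,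
and Z = (X₁·1_A, …, Xₙ·1_A), then DQ^VaR_α(Z) = p · DQ^VaR_α(X). -/
theorem stmt10 {Ω : Type*} [MeasurableSpace Ω] (P : Measure Ω) [IsProbabilityMeasure P]
    (hP : Atomless P) (n : ℕ) (X : Fin n → Ω → ℝ) (hX : ∀ i, Measurable (X i))
    (α : ℝ) (hα : α ∈ Set.Ioo (0 : ℝ) 1) (hVaR0 : ∀ i, VaR P α (X i) = 0)
    (A : Set Ω) (hA : MeasurableSet A) (p : ℝ) (hp : p ∈ Set.Ioo (0 : ℝ) 1)
    (hpA : P A = ENNReal.ofReal p)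
    (hindep : ProbabilityTheory.Indep (MeasurableSpace.generateFrom {A})
      (MeasurableSpace.comap (fun ω (i : Fin n) => X i ω) inferInstance) P) :
    DQVaR P α (fun i ω => A.indicator (X i) ω) = p * DQVaR P α X := by
  have hpos : MeasurableSet {x : Fin n → ℝ | 0 < ∑ i, x i} :=
    measurableSet_lt (by fun_prop) (by fun_prop)
  simpa [measureReal_def, hpA, hp.1.le] using stmt10_general (fun i => (hX i).aemeasurable) hα
    hVaR0 hA.nullMeasurableSet (indepSet_preimage_of_indep_comap hindep hpos)
end

section
/- Let α ∈ (0,1) and let X = (X_1,…,X_n) be a vector of integrable random variables. If P(Σ_{i=1}^n X_i > Σ_{i=1}^n ES_α(X_i)) > 0, then DQ^ES_α(X) = (1/α)·inf_{r ∈ (0,∞)} E[(r·Σ_{i=1}^n (X_i − ES_α(X_i)) + 1)_+]; otherwise DQ^ES_α(X) = 0. -/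
open MeasureTheory ProbabilityTheory Filter Set

/-!
Under Lebesgue measure on `(0, 1)`, the function `u ↦ VaR_u(S)` has the law of `S`; it is also
antitone in `u`. Comparing `∫_0^β (VaR_u(S) - x) du` with the integral of its positive part over
`(0, 1)` yields the Rockafellar–Uryasev inequality `β (ES_β(S) - x) ≤ E[(S - x)_+]`, with equality
at `x = VaR_β(S)`. Hence `ES_β(S) ≤ t` if and only if `E[(S - x)_+] ≤ β (t - x)` for some `x`.
When `P(S > t) > 0` such an `x` lies below `t`, and substituting `r = 1 / (t - x)` turns the
condition into `E[(r (S - t) + 1)_+] ≤ β` for some `r > 0`, so that the infimum of the admissible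
levels `β` is the infimum over `r`; the latter is at most `1`, as `r → 0` shows, in accordance with
the convention `inf ∅ = 1`. When `P(S > t) = 0` the choice `x = t` makes every level
admissible.
-/

namespace DQ

theorem sInf_setOf_le_cdf_le_iff (μ : Measure ℝ) {p : ℝ} (hp : p ∈ Ioo (0 : ℝ) 1) {x : ℝ} :
    sInf {y | p ≤ cdf μ y} ≤ x ↔ p ≤ cdf μ x := by
  have bddBelow : BddBelow {y | p ≤ cdf μ y} := by
    obtain ⟨a, ha⟩ := ((tendsto_cdf_atBot μ).eventually_lt_const hp.1).exists
    exact ⟨a, fun y hy => ((monotone_cdf μ).reflect_lt (ha.trans_le hy)).le⟩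
  have nonempty : {y | p ≤ cdf μ y}.Nonempty :=
    ((tendsto_cdf_atTop μ).eventually_const_le hp.2).exists
  refine ⟨fun h => ?_, fun h => csInf_le bddBelow h⟩
  have right_continuous : Tendsto (cdf μ) (nhdsWithin x (Ioi x)) (nhds (cdf μ x)) :=
    ((cdf μ).right_continuous x).mono Ioi_subset_Ici_self
  refine ge_of_tendsto right_continuous ?_
  filter_upwards [self_mem_nhdsWithin] with y hxy
  obtain ⟨z, hz, hzy⟩ := exists_lt_of_csInf_lt nonempty (h.trans_lt hxy)
  exact hz.trans (monotone_cdf μ hzy.le)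

theorem volume_Ici_inter_Ioo_zero_one {p : ℝ} (hp : p ≤ 1) :
    volume (Ici (1 - p) ∩ Ioo (0 : ℝ) 1) = ENNReal.ofReal p := by
  refine le_antisymm ?_ ?_
  · calc volume (Ici (1 - p) ∩ Ioo (0 : ℝ) 1)
      _ ≤ volume (Icc (1 - p) 1) := measure_mono fun u hu => ⟨hu.1, hu.2.2.le⟩
      _ = ENNReal.ofReal p := by rw [Real.volume_Icc, sub_sub_cancel]
  · calc ENNReal.ofReal p
      _ = volume (Ioo (1 - p) 1) := by rw [Real.volume_Ioo, sub_sub_cancel]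
      _ ≤ volume (Ici (1 - p) ∩ Ioo (0 : ℝ) 1) :=
        measure_mono fun u hu => ⟨hu.1.le, (sub_nonneg.2 hp).trans_lt hu.1, hu.2⟩

theorem sInf_Ioo_inter_upperClosure_union_one {A : Set ℝ} (nonempty : A.Nonempty)
    (pos : ∀ a ∈ A, 0 < a) (sInf_le : sInf A ≤ 1) :
    sInf ({β ∈ Ioo (0 : ℝ) 1 | ∃ a ∈ A, a ≤ β} ∪ {1}) = sInf A := by
  have bddBelow : BddBelow A := ⟨0, fun a ha => (pos a ha).le⟩
  have bddBelow_levels : BddBelow ({β ∈ Ioo (0 : ℝ) 1 | ∃ a ∈ A, a ≤ β} ∪ {1}) :=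
    (bddBelow_Ioo.mono (sep_subset _ _)).union bddBelow_singleton
  refine le_antisymm (le_csInf nonempty fun a ha => ?_) (le_csInf ⟨1, Or.inr rfl⟩ ?_)
  · rcases lt_or_ge a 1 with ha_lt | ha_ge
    · exact csInf_le bddBelow_levels (Or.inl ⟨⟨pos a ha, ha_lt⟩, a, ha, le_rfl⟩)
    · exact (csInf_le bddBelow_levels (Or.inr rfl)).trans ha_ge
  · rintro β (⟨-, a, ha, hle⟩ | rfl)
    · exact (csInf_le bddBelow ha).trans hle
    · exact sInf_le

variable {Ω : Type*} [MeasurableSpace Ω] {P : Measure Ω} {X : Ω → ℝ}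

/-- The stop-loss premium `E[(X - x)_+]` of `X` with retention `x`. -/
noncomputable def stopLoss (P : Measure Ω) (X : Ω → ℝ) (x : ℝ) : ℝ :=
  ∫ ω, max (X ω - x) 0 ∂P

/-- The infimum of the levels in `(0, 1)` at which the expected shortfall of `X` does not exceed
the threshold `t`, with value `1` if there are none. At `X = ∑ Xᵢ` and `t = ∑ ES_α(Xᵢ)` it is
`α*`. -/
noncomputable def shortfallLevel (P : Measure Ω) (X : Ω → ℝ) (t : ℝ) : ℝ :=
  sInf ({β ∈ Ioo (0 : ℝ) 1 | ES P β X ≤ t} ∪ {1})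

section StopLoss

theorem stopLoss_nonneg (P : Measure Ω) (X : Ω → ℝ) (x : ℝ) : 0 ≤ stopLoss P X x :=
  integral_nonneg fun _ => le_max_right _ _

theorem integral_max_mul_sub_add_one_eq_mul_stopLoss (P : Measure Ω) (X : Ω → ℝ) (t : ℝ) {r : ℝ}
    (hr : 0 < r) :
    ∫ ω, max (r * (X ω - t) + 1) 0 ∂P = r * stopLoss P X (t - r⁻¹) := by
  rw [stopLoss, ← integral_const_mul]
  congr with ω
  rw [mul_max_of_nonneg _ _ hr.le, mul_zero]
  congr 1
  field_simp
  ring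

variable [IsFiniteMeasure P]

theorem integrable_max_sub_zero (hX : Integrable X P) (x : ℝ) :
    Integrable (fun ω => max (X ω - x) 0) P :=
  (hX.sub (integrable_const x)).pos_part

theorem antitone_stopLoss (hX : Integrable X P) : Antitone (stopLoss P X) := fun x y hxy =>
  integral_mono (integrable_max_sub_zero hX y) (integrable_max_sub_zero hX x) fun ω =>
    max_le_max_right 0 (sub_le_sub_left hxy (X ω))

theorem stopLoss_pos_iff (hX : Integrable X P) {x : ℝ} :
    0 < stopLoss P X x ↔ 0 < P {ω | x < X ω} := by
  have max_nonneg : 0 ≤ fun ω => max (X ω - x) 0 := fun _ => le_max_right _ _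
  have support_eq : Function.support (fun ω => max (X ω - x) 0) = {ω | x < X ω} := by
    ext ω
    simp
  rw [stopLoss, integral_pos_iff_support_of_nonneg max_nonneg (integrable_max_sub_zero hX x),
    support_eq]

theorem integral_max_mul_sub_add_one_pos (hX : Integrable X P) {t : ℝ}
    (ht : 0 < P {ω | t < X ω}) {r : ℝ} (hr : 0 < r) :
    0 < ∫ ω, max (r * (X ω - t) + 1) 0 ∂P := by
  rw [integral_max_mul_sub_add_one_eq_mul_stopLoss P X t hr]
  have stopLoss_le : stopLoss P X t ≤ stopLoss P X (t - r⁻¹) :=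
    antitone_stopLoss hX (sub_le_self t (inv_nonneg.2 hr.le))
  exact mul_pos hr (((stopLoss_pos_iff hX).2 ht).trans_le stopLoss_le)

end StopLoss

variable [IsProbabilityMeasure P]

section VaR

theorem VaR_le_iff_s11 (hX : AEMeasurable X P) {u : ℝ} (hu : u ∈ Ioo (0 : ℝ) 1) {x : ℝ} :
    VaR P u X ≤ x ↔ 1 - u ≤ cdf (P.map X) x := by
  have := Measure.isProbabilityMeasure_map hX
  have cdf_eq (y : ℝ) : (P {ω | X ω ≤ y}).toReal = cdf (P.map X) y := by
    rw [cdf_eq_real, map_measureReal_apply_of_aemeasurable hX measurableSet_Iic]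
    rfl
  simp only [VaR, cdf_eq]
  exact sInf_setOf_le_cdf_le_iff _ ⟨sub_pos.2 hu.2, sub_lt_self 1 hu.1⟩

theorem antitoneOn_VaR (hX : AEMeasurable X P) :
    AntitoneOn (fun u => VaR P u X) (Ioo (0 : ℝ) 1) := fun _ hu _ hv huv =>
  (VaR_le_iff_s11 hX hv).2 ((sub_le_sub_left huv 1).trans ((VaR_le_iff_s11 hX hu).1 le_rfl))

theorem identDistrib_VaR (hX : AEMeasurable X P) :
    IdentDistrib (fun u => VaR P u X) X (volume.restrict (Ioo (0 : ℝ) 1)) P where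
  aemeasurable_fst := aemeasurable_restrict_of_antitoneOn measurableSet_Ioo (antitoneOn_VaR hX)
  aemeasurable_snd := hX
  map_eq := by
    have := Measure.isProbabilityMeasure_map hX
    refine Measure.ext_of_Iic _ _ fun x => ?_
    have preimage_eq : (fun u => VaR P u X) ⁻¹' Iic x ∩ Ioo 0 1
        = Ici (1 - cdf (P.map X) x) ∩ Ioo 0 1 := by
      ext u
      refine and_congr_left fun hu => (VaR_le_iff_s11 hX hu).trans ?_
      rw [mem_Ici, sub_le_comm]
    rw [Measure.map_apply_of_aemeasurable
        (aemeasurable_restrict_of_antitoneOn measurableSet_Ioo (antitoneOn_VaR hX))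
        measurableSet_Iic, Measure.restrict_apply' measurableSet_Ioo, preimage_eq,
      volume_Ici_inter_Ioo_zero_one (cdf_le_one _ x), ofReal_cdf]

theorem integrableOn_VaR (hX : Integrable X P) :
    IntegrableOn (fun u => VaR P u X) (Ioo (0 : ℝ) 1) :=
  (identDistrib_VaR hX.aemeasurable).integrable_iff.2 hX

theorem setIntegral_max_VaR_sub (hX : AEMeasurable X P) (x : ℝ) :
    ∫ u in Ioo (0 : ℝ) 1, max (VaR P u X - x) 0 = stopLoss P X x :=
  ((identDistrib_VaR hX).comp (u := fun y => max (y - x) 0) (by fun_prop)).integral_eq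

end VaR

section ExpectedShortfall

variable {β : ℝ}

theorem mul_ES_sub (hX : Integrable X P) (hβ : β ∈ Ioc (0 : ℝ) 1) (x : ℝ) :
    β * (ES P β X - x) = ∫ u in Ioo (0 : ℝ) β, (VaR P u X - x) := by
  rw [integral_sub ((integrableOn_VaR hX).mono_set (Ioo_subset_Ioo_right hβ.2))
      (integrable_const x), setIntegral_const, Real.volume_real_Ioo_of_le hβ.1.le, ES, smul_eq_mul,
    sub_zero, mul_sub, ← mul_assoc, mul_one_div_cancel hβ.1.ne', one_mul]

theorem mul_ES_sub_le_stopLoss (hX : Integrable X P) (hβ : β ∈ Ioc (0 : ℝ) 1) (x : ℝ) :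
    β * (ES P β X - x) ≤ stopLoss P X x := by
  have subset : Ioo 0 β ⊆ Ioo 0 1 := Ioo_subset_Ioo_right hβ.2
  have integrable_sub : IntegrableOn (fun u => VaR P u X - x) (Ioo 0 1) :=
    (integrableOn_VaR hX).sub (integrable_const x)
  have integrable_max : IntegrableOn (fun u => max (VaR P u X - x) 0) (Ioo 0 1) :=
    integrable_sub.pos_part
  calc β * (ES P β X - x)
    _ = ∫ u in Ioo 0 β, (VaR P u X - x) := mul_ES_sub hX hβ x
    _ ≤ ∫ u in Ioo 0 β, max (VaR P u X - x) 0 :=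
      integral_mono (integrable_sub.mono_set subset) (integrable_max.mono_set subset)
        fun _ => le_max_left _ _
    _ ≤ ∫ u in Ioo 0 1, max (VaR P u X - x) 0 :=
      setIntegral_mono_set integrable_max
        (Eventually.of_forall fun _ => le_max_right _ _) subset.eventuallyLE
    _ = stopLoss P X x := setIntegral_max_VaR_sub hX.aemeasurable x

theorem mul_ES_sub_VaR (hX : Integrable X P) (hβ : β ∈ Ioo (0 : ℝ) 1) :
    β * (ES P β X - VaR P β X) = stopLoss P X (VaR P β X) := by
  have subset : Ioo 0 β ⊆ Ioo 0 1 := Ioo_subset_Ioo_right hβ.2.le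
  have VaR_anti := antitoneOn_VaR hX.aemeasurable
  calc β * (ES P β X - VaR P β X)
    _ = ∫ u in Ioo 0 β, (VaR P u X - VaR P β X) := mul_ES_sub hX (Ioo_subset_Ioc_self hβ) _
    _ = ∫ u in Ioo 0 β, max (VaR P u X - VaR P β X) 0 :=
      setIntegral_congr_fun measurableSet_Ioo fun u hu =>
        (max_eq_left (sub_nonneg.2 (VaR_anti (subset hu) hβ hu.2.le))).symm
    _ = ∫ u in Ioo 0 1, max (VaR P u X - VaR P β X) 0 := by
      refine (setIntegral_eq_of_subset_of_forall_sdiff_eq_zero measurableSet_Ioo subset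
        fun u hu => max_eq_right (sub_nonpos.2 (VaR_anti hβ hu.1 ?_))).symm
      exact not_lt.1 fun huβ => hu.2 ⟨hu.1.1, huβ⟩
    _ = stopLoss P X (VaR P β X) := setIntegral_max_VaR_sub hX.aemeasurable _

theorem ES_le_iff_exists_stopLoss_le (hX : Integrable X P) (hβ : β ∈ Ioo (0 : ℝ) 1) {t : ℝ} :
    ES P β X ≤ t ↔ ∃ x, stopLoss P X x ≤ β * (t - x) := by
  constructor
  · intro h
    refine ⟨VaR P β X, ?_⟩
    rw [← mul_ES_sub_VaR hX hβ]
    exact mul_le_mul_of_nonneg_left (sub_le_sub_right h _) hβ.1.le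
  · rintro ⟨x, hx⟩
    have mul_le := (mul_ES_sub_le_stopLoss hX (Ioo_subset_Ioc_self hβ) x).trans hx
    exact (sub_le_sub_iff_right x).1 (le_of_mul_le_mul_left mul_le hβ.1)

theorem ES_le_iff_exists_integral_le (hX : Integrable X P) {t : ℝ} (ht : 0 < P {ω | t < X ω})
    (hβ : β ∈ Ioo (0 : ℝ) 1) :
    ES P β X ≤ t ↔ ∃ r > 0, ∫ ω, max (r * (X ω - t) + 1) 0 ∂P ≤ β := by
  rw [ES_le_iff_exists_stopLoss_le hX hβ]
  constructor
  · rintro ⟨x, hx⟩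
    have hxt : x < t := by
      by_contra! htx
      have stopLoss_nonpos : stopLoss P X x ≤ 0 :=
        hx.trans (mul_nonpos_of_nonneg_of_nonpos hβ.1.le (sub_nonpos.2 htx))
      have sub_x_nonneg : 0 ≤ t - x :=
        nonneg_of_mul_nonneg_right ((stopLoss_nonneg P X x).trans hx) hβ.1
      obtain rfl : x = t := le_antisymm (sub_nonneg.1 sub_x_nonneg) htx
      exact stopLoss_nonpos.not_gt ((stopLoss_pos_iff hX).2 ht)
    refine ⟨(t - x)⁻¹, inv_pos.2 (sub_pos.2 hxt), ?_⟩
    rw [integral_max_mul_sub_add_one_eq_mul_stopLoss P X t (inv_pos.2 (sub_pos.2 hxt)), inv_inv,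
      sub_sub_cancel, inv_mul_le_iff₀ (sub_pos.2 hxt), mul_comm]
    exact hx
  · rintro ⟨r, hr, hle⟩
    refine ⟨t - r⁻¹, ?_⟩
    rw [integral_max_mul_sub_add_one_eq_mul_stopLoss P X t hr] at hle
    rwa [sub_sub_cancel, ← div_eq_mul_inv, le_div_iff₀' hr]

end ExpectedShortfall

section ShortfallLevel

theorem integral_max_mul_sub_add_one_le (hX : Integrable X P) (t : ℝ) {r : ℝ} (hr : 0 ≤ r) :
    ∫ ω, max (r * (X ω - t) + 1) 0 ∂P ≤ r * stopLoss P X t + 1 := by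
  have integrable_mul : Integrable (fun ω => r * max (X ω - t) 0) P :=
    (integrable_max_sub_zero hX t).const_mul r
  calc ∫ ω, max (r * (X ω - t) + 1) 0 ∂P
    _ ≤ ∫ ω, (r * max (X ω - t) 0 + 1) ∂P := by
      refine integral_mono (((hX.sub (integrable_const t)).const_mul r).add
        (integrable_const 1)).pos_part (integrable_mul.add (integrable_const 1)) fun ω => ?_
      refine max_le ?_ (by positivity)
      gcongr
      exact le_max_left _ _
    _ = r * stopLoss P X t + 1 := by
      rw [integral_add integrable_mul (integrable_const 1), integral_const_mul, stopLoss]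
      simp

theorem sInf_integral_max_mul_sub_add_one_le_one (hX : Integrable X P) (t : ℝ) :
    sInf ((fun r : ℝ => ∫ ω, max (r * (X ω - t) + 1) 0 ∂P) '' Ioi 0) ≤ 1 := by
  have bddBelow : BddBelow ((fun r : ℝ => ∫ ω, max (r * (X ω - t) + 1) 0 ∂P) '' Ioi 0) :=
    ⟨0, forall_mem_image.2 fun _ _ => integral_nonneg fun _ => le_max_right _ _⟩
  have tendsto_bound :
      Tendsto (fun r => r * stopLoss P X t + 1) (nhdsWithin 0 (Ioi 0)) (nhds 1) :=
    tendsto_nhdsWithin_of_tendsto_nhds (Continuous.tendsto' (by fun_prop) _ _ (by simp))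
  refine ge_of_tendsto tendsto_bound ?_
  filter_upwards [self_mem_nhdsWithin] with r hr
  exact (csInf_le bddBelow (mem_image_of_mem _ hr)).trans
    (integral_max_mul_sub_add_one_le hX t (le_of_lt hr))

theorem shortfallLevel_eq_sInf (hX : Integrable X P) {t : ℝ} (ht : 0 < P {ω | t < X ω}) :
    shortfallLevel P X t =
      sInf ((fun r : ℝ => ∫ ω, max (r * (X ω - t) + 1) 0 ∂P) '' Ioi 0) := by
  have levels_eq : {β ∈ Ioo (0 : ℝ) 1 | ES P β X ≤ t} = {β ∈ Ioo (0 : ℝ) 1 |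
      ∃ a ∈ (fun r : ℝ => ∫ ω, max (r * (X ω - t) + 1) 0 ∂P) '' Ioi 0, a ≤ β} := by
    ext β
    refine and_congr_right fun hβ => ?_
    rw [ES_le_iff_exists_integral_le hX ht hβ, exists_mem_image]
    rfl
  rw [shortfallLevel, levels_eq]
  exact sInf_Ioo_inter_upperClosure_union_one (nonempty_Ioi.image _)
    (forall_mem_image.2 fun _ hr => integral_max_mul_sub_add_one_pos hX ht hr)
    (sInf_integral_max_mul_sub_add_one_le_one hX t)

theorem shortfallLevel_eq_zero (hX : Integrable X P) {t : ℝ} (ht : P {ω | t < X ω} = 0) :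
    shortfallLevel P X t = 0 := by
  have stopLoss_nonpos : stopLoss P X t ≤ 0 :=
    not_lt.1 fun h => ((stopLoss_pos_iff hX).1 h).ne' ht
  have ES_le : ∀ β ∈ Ioo (0 : ℝ) 1, ES P β X ≤ t := fun β hβ =>
    (ES_le_iff_exists_stopLoss_le hX hβ).2 ⟨t, by simpa using stopLoss_nonpos⟩
  rw [shortfallLevel, sep_eq_self_iff_mem_true.2 ES_le, Ioo_union_right zero_lt_one,
    csInf_Ioc zero_lt_one]

theorem DQES_eq_one_div_mul_shortfallLevel (P : Measure Ω) (α : ℝ) {n : ℕ} (X : Fin n → Ω → ℝ) :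
    DQES P α X = 1 / α * shortfallLevel P (fun ω => ∑ i, X i ω) (∑ i, ES P α (X i)) :=
  (one_div_mul_eq_div _ _).symm

end ShortfallLevel

end DQ

open DQ in
theorem stmt11_general {Ω : Type*} [MeasurableSpace Ω] {P : Measure Ω} [IsProbabilityMeasure P]
    {X : Ω → ℝ} (hX : Integrable X P) (t : ℝ) :
    (0 < P {ω | t < X ω} →
      shortfallLevel P X t =
        sInf ((fun r : ℝ => ∫ ω, max (r * (X ω - t) + 1) 0 ∂P) '' Ioi 0)) ∧
    (P {ω | t < X ω} = 0 → shortfallLevel P X t = 0) :=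
  ⟨shortfallLevel_eq_sInf hX, shortfallLevel_eq_zero hX⟩

open DQ in
/-- If P(∑ Xᵢ > ∑ ES_α(Xᵢ)) > 0 then
DQ^ES_α(X) = (1/α)·inf_{r>0} E[(r·∑(Xᵢ − ES_α(Xᵢ)) + 1)₊]; otherwise DQ^ES_α(X) = 0. -/
theorem stmt11 {Ω : Type*} [MeasurableSpace Ω] (P : Measure Ω) [IsProbabilityMeasure P]
    (hP : Atomless P) (n : ℕ) (X : Fin n → Ω → ℝ) (hX : ∀ i, Measurable (X i))
    (hint : ∀ i, Integrable (X i) P) (α : ℝ) (hα : α ∈ Set.Ioo (0 : ℝ) 1) :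
    (0 < P {ω | (∑ i, ES P α (X i)) < ∑ i, X i ω} →
      DQES P α X = (1 / α) *
        sInf ((fun r : ℝ =>
            ∫ ω, max (r * (∑ i, (X i ω - ES P α (X i))) + 1) 0 ∂P) '' Set.Ioi 0)) ∧
    (P {ω | (∑ i, ES P α (X i)) < ∑ i, X i ω} = 0 → DQES P α X = 0) := by
  simp only [DQES_eq_one_div_mul_shortfallLevel, Finset.sum_sub_distrib]
  exact (stmt11_general (integrable_finsetSum _ fun i _ => hint i) _).imp
    (fun h hpos => by rw [h hpos]) (fun h hzero => by rw [h hzero, mul_zero])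
end
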